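/- Let 0<α≤1 and let {q_n : n≥0} be a non-increasing sequence of non-negative reals with q_0>0 satisfying n^α/Q_n = O(1) and (q_n − q_{n+1})/n^{α−2} = O(1) as n→∞. Then there exists a constant c_α such that for every N∈ℕ and every 1/(1+α)-atom a with support I_N (so ‖a‖_∞ ≤ M_N^{1+α} and ∫_{I_N} a dμ = 0): ∫_{G_m \ I_N} ( sup_{n > M_N} |t_n a(x)| / log^{1+α}(n+1) )^{1/(1+α)} dμ(x) ≤ c_α. -/

import Mathlib

open MeasureTheory Filter Finset Asymptotics
open scoped ENNReal NNReal

noncomputable section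

namespace Vilenkin

/-- The Vilenkin group `G_m`: the complete direct product of the cyclic groups `Z_{m_n}`. -/
abbrev G (m : ℕ → ℕ) := ∀ n, ZMod (m n)

/-- The generalized number system `M_0 = 1`, `M_{n+1} = m_n M_n`. -/
def MM (m : ℕ → ℕ) : ℕ → ℕ
  | 0 => 1
  | n + 1 => m n * MM m n

/-- The generalized Rademacher functions `r_k(x) = exp(2 π i x_k / m_k)`. -/
def rade (m : ℕ → ℕ) (k : ℕ) (x : G m) : ℂ :=
  Complex.exp (2 * Real.pi * Complex.I * ((x k).val : ℂ) / (m k : ℂ))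

/-- The Vilenkin system `ψ_n = ∏_k r_k^{n_k}`, where `n = ∑_k n_k M_k` is the expansion of `n`
in the generalized number system (the digits `n_k = (n / M_k) mod m_k` vanish for `k > n`). -/
def psi (m : ℕ → ℕ) (n : ℕ) (x : G m) : ℂ :=
  ∏ k ∈ Finset.range (n + 1), rade m k x ^ (n / MM m k % m k)

/-- The Dirichlet kernels `D_n = ∑_{k=0}^{n-1} ψ_k`. -/
def D (m : ℕ → ℕ) (n : ℕ) (x : G m) : ℂ := ∑ k ∈ Finset.range n, psi m k x

/-- The Fejér kernels `K_n = (1/n) ∑_{k=1}^{n} D_k`. -/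
def K (m : ℕ → ℕ) (n : ℕ) (x : G m) : ℂ := (n : ℂ)⁻¹ * ∑ k ∈ Finset.Icc 1 n, D m k x

/-- `Q_n = ∑_{k=0}^{n-1} q_k`. -/
def Q (q : ℕ → ℝ) (n : ℕ) : ℝ := ∑ k ∈ Finset.range n, q k

/-- The Nörlund kernels `F_n = (1/Q_n) ∑_{k=1}^{n} q_{n-k} D_k`. -/
def F (m : ℕ → ℕ) (q : ℕ → ℝ) (n : ℕ) (x : G m) : ℂ :=
  ((Q q n : ℝ) : ℂ)⁻¹ * ∑ k ∈ Finset.Icc 1 n, (q (n - k) : ℂ) * D m k x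

/-- The interval (cylinder) `I_n(x) = {y : y_j = x_j for all j < n}`. -/
def cyl (m : ℕ → ℕ) (n : ℕ) (x : G m) : Set (G m) := {y | ∀ j < n, y j = x j}

/-- The element `s_k e_k` of `G_m` (value `s_k` in coordinate `k`, zero elsewhere). -/
def oneSpike (m : ℕ → ℕ) (k sk : ℕ) : G m := fun j => if j = k then (sk : ZMod (m j)) else 0

/-- The element `s_k e_k + s_l e_l` of `G_m` (for `k ≠ l`). -/
def twoSpike (m : ℕ → ℕ) (k sk l sl : ℕ) : G m :=
  fun j => if j = k then (sk : ZMod (m j)) else if j = l then (sl : ZMod (m j)) else 0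

/-- The σ-algebra `𝔉_n` generated by the intervals `I_n(x)`, i.e. by the first `n`
coordinates. -/
def filt (m : ℕ → ℕ) (n : ℕ) : MeasurableSpace (G m) :=
  MeasurableSpace.comap (fun x (i : Fin n) => x i.val) inferInstance

/-- `f = (f^{(n)})` is a martingale with respect to the filtration `(𝔉_n)` and the measure `μ`. -/
def IsMartingale (m : ℕ → ℕ) (μ : Measure (G m)) (f : ℕ → G m → ℂ) : Prop :=
  (∀ n, Integrable (f n) μ) ∧ (∀ n, Measurable[filt m n] (f n)) ∧
    ∀ n, ∀ s : Set (G m), MeasurableSet[filt m n] s →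
      ∫ x in s, f (n + 1) x ∂μ = ∫ x in s, f n x ∂μ

/-- The `L_p`-quasinorm `(∫ g^p dμ)^{1/p}` of a nonnegative (extended-real-valued) function. -/
def lpNormE (m : ℕ → ℕ) (μ : Measure (G m)) (p : ℝ) (g : G m → ℝ≥0∞) : ℝ≥0∞ :=
  (∫⁻ x, g x ^ p ∂μ) ^ (1 / p)

/-- The martingale Hardy space quasinorm `‖f‖_{H_p} = ‖sup_n |f^{(n)}|‖_p`. -/
def HpNorm (m : ℕ → ℕ) (μ : Measure (G m)) (p : ℝ) (f : ℕ → G m → ℂ) : ℝ≥0∞ :=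
  lpNormE m μ p (fun x => ⨆ n, (‖f n x‖₊ : ℝ≥0∞))

/-- The Vilenkin-Fourier coefficients of a martingale:
`f̂(i) = lim_k ∫ f^{(k)} conj ψ_i dμ`. -/
def mcoef (m : ℕ → ℕ) (μ : Measure (G m)) (f : ℕ → G m → ℂ) (i : ℕ) : ℂ :=
  limUnder atTop fun k => ∫ x, f k x * (starRingEnd ℂ) (psi m i x) ∂μ

/-- The partial sums `S_n f = ∑_{k=0}^{n-1} f̂(k) ψ_k` of the Vilenkin-Fourier series of a
martingale. -/
def mS (m : ℕ → ℕ) (μ : Measure (G m)) (f : ℕ → G m → ℂ) (n : ℕ) (x : G m) : ℂ :=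
  ∑ k ∈ Finset.range n, mcoef m μ f k * psi m k x

/-- The Nörlund means `t_n f = (1/Q_n) ∑_{k=1}^{n} q_{n-k} S_k f` of a martingale. -/
def mT (m : ℕ → ℕ) (q : ℕ → ℝ) (μ : Measure (G m)) (f : ℕ → G m → ℂ) (n : ℕ) (x : G m) : ℂ :=
  ((Q q n : ℝ) : ℂ)⁻¹ * ∑ k ∈ Finset.Icc 1 n, (q (n - k) : ℂ) * mS m μ f k x

/-- The Cesàro numbers `A_0^α = 0`, `A_n^α = (α+1)⋯(α+n)/n!`. -/
def AC (α : ℝ) (n : ℕ) : ℝ :=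
  if n = 0 then 0 else (∏ j ∈ Finset.Icc 1 n, (α + (j : ℝ))) / (n.factorial : ℝ)

/-- The `(C,α)` (Cesàro) means `σ_n^α f = (1/A_n^α) ∑_{k=1}^{n} A_{n-k}^{α-1} S_k f` of a
martingale. -/
def mCes (m : ℕ → ℕ) (α : ℝ) (μ : Measure (G m)) (f : ℕ → G m → ℂ) (n : ℕ) (x : G m) : ℂ :=
  ((AC α n : ℝ) : ℂ)⁻¹ * ∑ k ∈ Finset.Icc 1 n, ((AC (α - 1) (n - k) : ℝ) : ℂ) * mS m μ f k x

/-- The Fejér means `σ_n f = (1/n) ∑_{k=1}^{n} S_k f` of a martingale. -/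
def mFej (m : ℕ → ℕ) (μ : Measure (G m)) (f : ℕ → G m → ℂ) (n : ℕ) (x : G m) : ℂ :=
  (n : ℂ)⁻¹ * ∑ k ∈ Finset.Icc 1 n, mS m μ f k x

/-- The Vilenkin-Fourier coefficients of an integrable function. -/
def fcoef (m : ℕ → ℕ) (μ : Measure (G m)) (g : G m → ℂ) (i : ℕ) : ℂ :=
  ∫ x, g x * (starRingEnd ℂ) (psi m i x) ∂μ

/-- The partial sums of the Vilenkin-Fourier series of an integrable function. -/
def fS (m : ℕ → ℕ) (μ : Measure (G m)) (g : G m → ℂ) (n : ℕ) (x : G m) : ℂ :=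
  ∑ k ∈ Finset.range n, fcoef m μ g k * psi m k x

/-- The Nörlund means of an integrable function. -/
def fT (m : ℕ → ℕ) (q : ℕ → ℝ) (μ : Measure (G m)) (g : G m → ℂ) (n : ℕ) (x : G m) : ℂ :=
  ((Q q n : ℝ) : ℂ)⁻¹ * ∑ k ∈ Finset.Icc 1 n, (q (n - k) : ℂ) * fS m μ g k x



lemma MM_pos {m : ℕ → ℕ} (hm : ∀ n, 2 ≤ m n) (n : ℕ) : 0 < MM m n := by
  induction n with
  | zero => simp [MM]
  | succ n ih => exact Nat.mul_pos (by have := hm n; omega) ih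

lemma MM_dvd {m : ℕ → ℕ} {k s : ℕ} (h : k ≤ s) : MM m k ∣ MM m s := by
  induction s, h using Nat.le_induction with
  | base => exact dvd_rfl
  | succ n _ ih => exact ih.trans (Dvd.intro_left _ rfl)

lemma two_pow_mul_MM_le {m : ℕ → ℕ} (hm : ∀ n, 2 ≤ m n) {k s : ℕ} (h : k ≤ s) :
    2 ^ (s - k) * MM m k ≤ MM m s := by
  induction s, h using Nat.le_induction with
  | base => simp
  | succ n hn ih =>
    have : n + 1 - k = (n - k) + 1 := by omega
    rw [this, pow_succ]
    calc 2 ^ (n - k) * 2 * MM m k = 2 * (2 ^ (n - k) * MM m k) := by ring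
      _ ≤ m n * MM m n := Nat.mul_le_mul (hm n) ih

lemma lt_MM {m : ℕ → ℕ} (hm : ∀ n, 2 ≤ m n) (k : ℕ) : k < MM m k := by
  have := two_pow_mul_MM_le hm (Nat.zero_le k)
  simp only [MM, Nat.sub_zero, mul_one] at this
  exact lt_of_lt_of_le Nat.lt_two_pow_self this

/-- Abstract Vilenkin function with values `w k` in place of the Rademacher functions. -/
def PP (m : ℕ → ℕ) (w : ℕ → ℂ) (i : ℕ) : ℂ :=
  ∏ k ∈ Finset.range (i + 1), w k ^ (i / MM m k % m k)

lemma PP_eq {m : ℕ → ℕ} (hm : ∀ n, 2 ≤ m n) (w : ℕ → ℂ) {i R : ℕ} (h : i < R) :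
    PP m w i = ∏ k ∈ Finset.range R, w k ^ (i / MM m k % m k) := by
  unfold PP
  apply Finset.prod_subset
  · intro k; simp only [Finset.mem_range]; omega
  · intro k _ hk
    simp only [Finset.mem_range] at hk
    have : i / MM m k = 0 := Nat.div_eq_of_lt (by have := lt_MM hm k; omega)
    simp [this]

lemma PP_split {m : ℕ → ℕ} (hm : ∀ n, 2 ≤ m n) (w : ℕ → ℂ) (s c u v : ℕ) (hu : u < m s)
    (hv : v < MM m s) :
    PP m w ((c * m s + u) * MM m s + v) = PP m w (c * MM m (s + 1)) * w s ^ u * PP m w v := by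
  set i := (c * m s + u) * MM m s + v with hi
  have hMs := MM_pos hm s
  have e1 : MM m (s + 1) = m s * MM m s := rfl
  have hi' : i = c * MM m (s + 1) + (u * MM m s + v) := by rw [hi, e1]; ring
  have hr : u * MM m s + v < MM m (s + 1) := by
    rw [e1]
    calc u * MM m s + v < u * MM m s + MM m s := by omega
      _ = (u + 1) * MM m s := by ring
      _ ≤ _ := Nat.mul_le_mul_right _ hu
  have hvi : v ≤ i := by omega
  have hci : c * MM m (s + 1) ≤ i := by omega
  set R := i + s + 1 with hR
  rw [PP_eq hm w (show i < R by omega), PP_eq hm w (show v < R by omega),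
    PP_eq hm w (show c * MM m (s + 1) < R by omega)]
  have : w s ^ u = ∏ k ∈ Finset.range R, (if k = s then w s ^ u else 1) := by
    rw [Finset.prod_ite_eq' (Finset.range R) s (fun _ => w s ^ u), if_pos (by simp; omega)]
  rw [this, ← Finset.prod_mul_distrib, ← Finset.prod_mul_distrib]
  apply Finset.prod_congr rfl
  intro k _
  have hMk := MM_pos hm k
  rcases lt_trichotomy k s with hks | hks | hks
  · rw [if_neg hks.ne]
    obtain ⟨e, he⟩ := MM_dvd (m := m) (show k + 1 ≤ s from hks)
    have ek : MM m (k + 1) = m k * MM m k := rfl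
    have h1 : i = v + MM m k * (m k * ((c * m s + u) * e)) := by rw [hi, he, ek]; ring
    have h2 : c * MM m (s + 1) = MM m k * (m k * (c * m s * e)) := by rw [e1, he, ek]; ring
    rw [h1, h2, Nat.add_mul_div_left _ _ hMk, Nat.add_mul_mod_self_left,
      Nat.mul_div_cancel_left _ hMk, Nat.mul_mod_right]
    simp
  · subst hks
    rw [if_pos rfl]
    have h1 : i / MM m k = u + m k * c := by
      rw [hi, mul_comm, Nat.mul_add_div hMk, Nat.div_eq_of_lt hv]; ring
    have h2 : c * MM m (k + 1) / MM m k = m k * c := by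
      rw [e1, show c * (m k * MM m k) = MM m k * (m k * c) by ring, Nat.mul_div_cancel_left _ hMk]
    rw [h1, h2, Nat.div_eq_of_lt hv, Nat.add_mul_mod_self_left, Nat.mod_eq_of_lt hu]
    simp
  · rw [if_neg hks.ne']
    obtain ⟨e, he⟩ := MM_dvd (m := m) (show s + 1 ≤ k from hks)
    have h1 : i / MM m k = c * MM m (s + 1) / MM m k := by
      have hp := MM_pos hm (s + 1)
      rw [he, ← Nat.div_div_eq_div_mul, ← Nat.div_div_eq_div_mul, hi', mul_comm c,
        Nat.mul_add_div hp, Nat.div_eq_of_lt hr, Nat.mul_div_cancel_left _ hp, add_zero]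
    have h2 : v / MM m k = 0 := Nat.div_eq_of_lt
      (hv.trans_le (Nat.le_of_dvd hMk (MM_dvd hks.le)))
    rw [h1, h2]; simp

lemma sum_range_mul_eq (f : ℕ → ℂ) (a b : ℕ) :
    ∑ i ∈ Finset.range (a * b), f i
      = ∑ u ∈ Finset.range a, ∑ v ∈ Finset.range b, f (u * b + v) := by
  induction a with
  | zero => simp
  | succ a ih => rw [Nat.succ_mul, Finset.sum_range_add, ih, Finset.sum_range_succ]

/-- Block sums vanish. -/
lemma block_zero {m : ℕ → ℕ} (w f g : ℕ → ℂ) (s : ℕ)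
    (hw : w s ^ m s = 1) (hw1 : w s ≠ 1)
    (hf : ∀ c u v, u < m s → v < MM m s → f ((c * m s + u) * MM m s + v) = g c * w s ^ u * f v)
    (c : ℕ) : ∑ i ∈ Finset.range (c * MM m (s + 1)), f i = 0 := by
  induction c with
  | zero => simp
  | succ c ih =>
    rw [Nat.succ_mul, Finset.sum_range_add, ih, zero_add]
    have e1 : MM m (s + 1) = m s * MM m s := rfl
    rw [e1, sum_range_mul_eq (fun x => f (c * (m s * MM m s) + x))]
    have : ∀ u ∈ Finset.range (m s), ∑ v ∈ Finset.range (MM m s),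
        f (c * (m s * MM m s) + (u * MM m s + v))
          = w s ^ u * (g c * ∑ v ∈ Finset.range (MM m s), f v) := by
      intro u hu
      rw [Finset.mul_sum, Finset.mul_sum]
      apply Finset.sum_congr rfl
      intro v hv
      rw [show c * (m s * MM m s) + (u * MM m s + v) = (c * m s + u) * MM m s + v by ring,
        hf c u v (Finset.mem_range.1 hu) (Finset.mem_range.1 hv)]
      ring
    rw [Finset.sum_congr rfl this, ← Finset.sum_mul, geom_sum_eq hw1, hw]
    simp

lemma block_bound {m : ℕ → ℕ} (hm : ∀ n, 2 ≤ m n) (w f g : ℕ → ℂ) (s : ℕ)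
    (hw : w s ^ m s = 1) (hw1 : w s ≠ 1)
    (hf : ∀ c u v, u < m s → v < MM m s → f ((c * m s + u) * MM m s + v) = g c * w s ^ u * f v)
    (L : ℝ) (hL : ∀ i, ‖f i‖ ≤ L) (n : ℕ) :
    ‖∑ i ∈ Finset.range n, f i‖ ≤ MM m (s + 1) * L := by
  have hp := MM_pos hm (s + 1)
  have hn : n = n / MM m (s + 1) * MM m (s + 1) + n % MM m (s + 1) := by
    rw [mul_comm]; exact (Nat.div_add_mod _ _).symm
  rw [hn, Finset.sum_range_add, block_zero w f g s hw hw1 hf, zero_add]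
  refine (norm_sum_le _ _).trans ?_
  refine (Finset.sum_le_card_nsmul _ _ L (fun i _ => hL _)).trans ?_
  rw [Finset.card_range, nsmul_eq_mul]
  have h0 : 0 ≤ L := (norm_nonneg _).trans (hL 0)
  gcongr
  exact (Nat.mod_lt _ hp).le

lemma norm_PP (m : ℕ → ℕ) (w : ℕ → ℂ) (hw : ∀ k, ‖w k‖ = 1) (i : ℕ) : ‖PP m w i‖ = 1 := by
  unfold PP
  rw [norm_prod]
  simp [hw]

lemma DD_bound {m : ℕ → ℕ} (hm : ∀ n, 2 ≤ m n) (w : ℕ → ℂ) (hw : ∀ k, ‖w k‖ = 1)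
    (hwm : ∀ k, w k ^ m k = 1) {k : ℕ} (hk : w k ≠ 1) (n : ℕ) :
    ‖∑ i ∈ Finset.range n, PP m w i‖ ≤ MM m (k + 1) := by
  have := block_bound hm w (PP m w) (fun c => PP m w (c * MM m (k + 1))) k (hwm k) hk
    (fun c u v hu hv => PP_split hm w k c u v hu hv) 1 (fun i => (norm_PP m w hw i).le) n
  simpa using this

lemma SS_bound {m : ℕ → ℕ} (hm : ∀ n, 2 ≤ m n) (w : ℕ → ℂ) (hw : ∀ k, ‖w k‖ = 1)
    (hwm : ∀ k, w k ^ m k = 1) {k l : ℕ} (hkl : k < l) (hk : w k ≠ 1) (hl : w l ≠ 1) (n : ℕ) :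
    ‖∑ j ∈ Finset.range n, ∑ i ∈ Finset.range j, PP m w i‖ ≤ MM m (l + 1) * MM m (k + 1) := by
  refine block_bound hm w (fun j => ∑ i ∈ Finset.range j, PP m w i)
    (fun c => PP m w (c * MM m (l + 1))) l (hwm l) hl ?_ (MM m (k + 1))
    (fun j => DD_bound hm w hw hwm hk j) n
  intro c u v hu hv
  obtain ⟨e, he⟩ := MM_dvd (m := m) (show k + 1 ≤ l from hkl)
  have h0 : ∑ i ∈ Finset.range ((c * m l + u) * MM m l), PP m w i = 0 := by
    rw [he, show (c * m l + u) * (MM m (k + 1) * e) = ((c * m l + u) * e) * MM m (k + 1) by ring]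
    exact block_zero w (PP m w) (fun c => PP m w (c * MM m (k + 1))) k (hwm k) hk
      (fun c u v hu hv => PP_split hm w k c u v hu hv) _
  rw [Finset.sum_range_add, h0, zero_add, Finset.mul_sum]
  apply Finset.sum_congr rfl
  intro x hx
  exact PP_split hm w l c u x hu ((Finset.mem_range.1 hx).trans hv)

lemma abel_bound (c : ℕ → ℝ) (hc0 : ∀ j, 0 ≤ c j) (hc : ∀ j, c j ≤ c (j + 1)) (d : ℕ → ℂ) (L : ℝ)
    (hL : ∀ n, ‖∑ j ∈ Finset.range n, d j‖ ≤ L) (J : ℕ) :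
    ‖∑ j ∈ Finset.range (J + 1), (c j : ℂ) * d j‖ ≤ 2 * c J * L := by
  have h0 : 0 ≤ L := (norm_nonneg _).trans (hL 0)
  have key : ‖∑ j ∈ Finset.range (J + 1), (c j : ℂ) * d j
      - c J * ∑ j ∈ Finset.range (J + 1), d j‖ ≤ (c J - c 0) * L := by
    induction J with
    | zero => simp
    | succ J ih =>
      have e : ∑ j ∈ Finset.range (J + 1 + 1), (c j : ℂ) * d j
          - c (J + 1) * ∑ j ∈ Finset.range (J + 1 + 1), d j
          = (∑ j ∈ Finset.range (J + 1), (c j : ℂ) * d j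
            - c J * ∑ j ∈ Finset.range (J + 1), d j)
            - ((c (J + 1) - c J : ℝ) : ℂ) * ∑ j ∈ Finset.range (J + 1), d j := by
        rw [Finset.sum_range_succ _ (J + 1), Finset.sum_range_succ _ (J + 1)]
        push_cast; ring
      rw [e]
      refine (norm_sub_le _ _).trans ?_
      rw [norm_mul, Complex.norm_real, Real.norm_of_nonneg (sub_nonneg.2 (hc J))]
      have := mul_le_mul_of_nonneg_left (hL (J + 1)) (sub_nonneg.2 (hc J))
      linarith
  have e : ∑ j ∈ Finset.range (J + 1), (c j : ℂ) * d j = (∑ j ∈ Finset.range (J + 1), (c j : ℂ) * d j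
      - c J * ∑ j ∈ Finset.range (J + 1), d j) + c J * ∑ j ∈ Finset.range (J + 1), d j := by ring
  rw [e]
  refine (norm_add_le _ _).trans ?_
  rw [norm_mul, Complex.norm_real, Real.norm_of_nonneg (hc0 J)]
  have := mul_le_mul_of_nonneg_left (hL (J + 1)) (hc0 J)
  have := mul_nonneg (hc0 0) h0
  linarith

lemma sum_Icc_eq (n : ℕ) (f : ℕ → ℂ) (h0 : f 0 = 0) :
    ∑ k ∈ Finset.Icc 1 n, f k = ∑ k ∈ Finset.range (n + 1), f k := by
  rw [Finset.sum_range_succ', h0, add_zero]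
  rw [Finset.range_eq_Ico, Finset.sum_Ico_add' f 0 n 1]
  rfl

/-- trivial bound of the kernel. -/
lemma kernel_bound1 (q : ℕ → ℝ) (hqnn : ∀ n, 0 ≤ q n) (d : ℕ → ℂ) (A : ℝ)
    (hd : ∀ j, ‖d j‖ ≤ A) (n : ℕ) :
    ‖∑ k ∈ Finset.Icc 1 n, (q (n - k) : ℂ) * d k‖ ≤ A * Q q n := by
  refine (norm_sum_le _ _).trans ?_
  have : ∑ k ∈ Finset.Icc 1 n, q (n - k) = Q q n := by
    unfold Q
    rw [← Finset.sum_range_reflect]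
    rw [Finset.range_eq_Ico]
    have := Finset.sum_Ico_add' (fun k => q (n - k)) 0 n 1
    have e : Finset.Icc 1 n = Finset.Ico (0 + 1) (n + 1) := rfl
    rw [e, ← this]
    apply Finset.sum_congr rfl
    intro x _
    congr 1; omega
  rw [← this, Finset.mul_sum]
  apply Finset.sum_le_sum
  intro k _
  rw [norm_mul, Complex.norm_real, Real.norm_of_nonneg (hqnn _), mul_comm]
  exact mul_le_mul_of_nonneg_right (hd k) (hqnn _)

lemma mul_q_le_Q (q : ℕ → ℝ) (hqm : Antitone q) (n : ℕ) : n * q n ≤ Q q n := by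
  unfold Q
  have := Finset.card_nsmul_le_sum (Finset.range n) q (q n)
    (fun i hi => hqm (Finset.mem_range.1 hi).le)
  simpa using this

lemma kernel_bound2 (q : ℕ → ℝ) (hqnn : ∀ n, 0 ≤ q n) (hqm : Antitone q) (d : ℕ → ℂ) (A E : ℝ)
    (hd0 : d 0 = 0) (hd : ∀ j, ‖d j‖ ≤ A) (L n : ℕ) (hLn : L ≤ n) (hE : 0 ≤ E)
    (hS : ∀ n, ‖∑ j ∈ Finset.range n, d j‖ ≤ L * E) :
    ‖∑ k ∈ Finset.Icc 1 n, (q (n - k) : ℂ) * d k‖ ≤ (A + 2 * E) * Q q L := by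
  rw [sum_Icc_eq _ _ (by simp [hd0])]
  obtain ⟨R, rfl⟩ := Nat.exists_eq_add_of_le' hLn
  rw [show R + L + 1 = (R + 1) + L by ring, Finset.sum_range_add]
  refine (norm_add_le _ _).trans ?_
  have h1 := abel_bound (fun j => q (R + L - j)) (fun j => hqnn _) (fun j => hqm (by omega)) d _ hS R
  have h2 := kernel_bound1 q hqnn (fun j => d (R + j)) A (fun j => hd _) L
  have e : ∑ x ∈ Finset.range L, (q (R + L - (R + 1 + x)) : ℂ) * d (R + 1 + x)
      = ∑ k ∈ Finset.Icc 1 L, (q (L - k) : ℂ) * d (R + k) := by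
    have := Finset.sum_Ico_add' (fun k => (q (L - k) : ℂ) * d (R + k)) 0 L 1
    have e : Finset.Icc 1 L = Finset.Ico (0 + 1) (L + 1) := rfl
    rw [e, ← this, Finset.range_eq_Ico]
    apply Finset.sum_congr rfl
    intro x _
    rw [show R + L - (R + 1 + x) = L - (x + 1) by omega, show R + 1 + x = R + (x + 1) by ring]
  rw [e]
  simp only [Nat.add_sub_cancel_left] at h1
  have h3 := mul_le_mul_of_nonneg_right (mul_q_le_Q q hqm L) hE
  linarith

lemma tel1 (α : ℝ) (hα0 : 0 < α) (hα1 : α < 1) (i : ℕ) (hi : 1 ≤ i) :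
    (i : ℝ) ^ (α - 2) ≤ 4 / (1 - α) * ((i : ℝ) ^ (α - 1) - ((i + 1 : ℕ) : ℝ) ^ (α - 1)) := by
  set β := 1 - α with hβ
  have hb0 : 0 < β := by linarith
  have hi0 : (0 : ℝ) < i := by exact_mod_cast hi
  have hi1 : (1 : ℝ) ≤ i := by exact_mod_cast hi
  have e1 : α - 2 = -β - 1 := by rw [hβ]; ring
  have e2 : α - 1 = -β := by rw [hβ]; ring
  rw [e1, e2]
  push_cast
  set y : ℝ := (i : ℝ) + 1 with hy
  have hy0 : 0 < y := by linarith
  have hber := rpow_one_add_le_one_add_mul_self (s := -(1 / y)) (p := β)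
    (by rw [neg_le_neg_iff, div_le_one hy0]; linarith) hb0.le (by linarith)
  have e3 : 1 + -(1 / y) = i / y := by rw [hy]; field_simp; ring
  rw [e3, Real.div_rpow hi0.le hy0.le] at hber
  -- i^β ≤ y^β (1 - β / y)
  have hyb : 0 < y ^ β := Real.rpow_pos_of_pos hy0 _
  have hib : 0 < (i : ℝ) ^ β := Real.rpow_pos_of_pos hi0 _
  rw [div_le_iff₀ hyb] at hber
  rw [Real.rpow_sub_one hi0.ne', Real.rpow_neg hi0.le, Real.rpow_neg hy0.le]
  have hile : (i : ℝ) ^ β ≤ y ^ β := Real.rpow_le_rpow hi0.le (by linarith) hb0.le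
  have h1 : β / y / (i : ℝ) ^ β ≤ ((i : ℝ) ^ β)⁻¹ - (y ^ β)⁻¹ := by
    rw [inv_sub_inv hib.ne' hyb.ne', div_le_div_iff₀ hib (by positivity)]
    have : β / y * y ^ β ≤ y ^ β - (i : ℝ) ^ β := by
      have : (1 + β * -(1 / y)) * y ^ β = y ^ β - β / y * y ^ β := by ring
      linarith
    nlinarith
  calc ((i : ℝ) ^ β)⁻¹ / i ≤ 4 / β * (β / y / (i : ℝ) ^ β) := by
        have : 4 / β * (β / y / (i : ℝ) ^ β) = ((i : ℝ) ^ β)⁻¹ * (4 / y) := by field_simp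
        rw [this, div_eq_mul_inv]
        gcongr
        rw [inv_eq_one_div, div_le_div_iff₀ hi0 hy0]; linarith
    _ ≤ _ := by gcongr

lemma tel2 (α : ℝ) (hα0 : 0 < α) (hα1 : α ≤ 1) (i : ℕ) (hi : 1 ≤ i) :
    (i : ℝ) ^ (α - 1) ≤ 2 / α * (((i + 1 : ℕ) : ℝ) ^ α - (i : ℝ) ^ α) := by
  have hi0 : (0 : ℝ) < i := by exact_mod_cast hi
  have hi1 : (1 : ℝ) ≤ i := by exact_mod_cast hi
  push_cast
  set y : ℝ := (i : ℝ) + 1 with hy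
  have hy0 : 0 < y := by linarith
  have hber := rpow_one_add_le_one_add_mul_self (s := -(1 / y)) (p := α)
    (by rw [neg_le_neg_iff, div_le_one hy0]; linarith) hα0.le hα1
  have e3 : 1 + -(1 / y) = i / y := by rw [hy]; field_simp; ring
  rw [e3, Real.div_rpow hi0.le hy0.le] at hber
  have hyb : 0 < y ^ α := Real.rpow_pos_of_pos hy0 _
  have hib : 0 < (i : ℝ) ^ α := Real.rpow_pos_of_pos hi0 _
  rw [div_le_iff₀ hyb] at hber
  have hile : (i : ℝ) ^ α ≤ y ^ α := Real.rpow_le_rpow hi0.le (by linarith) hα0.le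
  rw [Real.rpow_sub_one hi0.ne']
  have h1 : α / y * (i : ℝ) ^ α ≤ y ^ α - (i : ℝ) ^ α := by
    have : (1 + α * -(1 / y)) * y ^ α = y ^ α - α / y * y ^ α := by ring
    have h2 : α / y * (i : ℝ) ^ α ≤ α / y * y ^ α := by gcongr
    linarith
  calc (i : ℝ) ^ α / i ≤ 2 / α * (α / y * (i : ℝ) ^ α) := by
        have : 2 / α * (α / y * (i : ℝ) ^ α) = (i : ℝ) ^ α * (2 / y) := by field_simp
        rw [this, div_eq_mul_inv]
        gcongr
        rw [inv_eq_one_div, div_le_div_iff₀ hi0 hy0]; linarith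
    _ ≤ _ := by gcongr

lemma q_bound (α : ℝ) (hα0 : 0 < α) (hα1 : α ≤ 1)
    (q : ℕ → ℝ) (hqnn : ∀ n, 0 ≤ q n) (hqm : Antitone q)
    (hq' : (fun n : ℕ => (q n - q (n + 1)) / (n : ℝ) ^ (α - 2)) =O[atTop] (fun _ => (1 : ℝ))) :
    ∃ C : ℝ, 0 ≤ C ∧ ∀ j n : ℕ, 1 ≤ j → j ≤ n → q j ≤ q n + C * (j : ℝ) ^ (α - 1) := by
  rcases hα1.eq_or_lt with rfl | hlt
  · refine ⟨q 0, hqnn 0, fun j n _ _ => ?_⟩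
    simp only [sub_self, Real.rpow_zero, mul_one]
    have := hqm (Nat.zero_le j)
    have := hqnn n
    linarith
  · obtain ⟨C, hC⟩ := (isBigO_one_nat_atTop_iff).1 hq'
    have hC0 : 0 ≤ C := (norm_nonneg _).trans (hC 0)
    refine ⟨C * (4 / (1 - α)), mul_nonneg hC0 (div_nonneg (by norm_num) (by linarith)), ?_⟩
    intro j n hj hjn
    have hstrong : q j + C * (4 / (1 - α)) * (n : ℝ) ^ (α - 1)
        ≤ q n + C * (4 / (1 - α)) * (j : ℝ) ^ (α - 1) := by
      induction n, hjn using Nat.le_induction with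
      | base => exact le_rfl
      | succ n hn ih =>
        have h1 := hC n
        have hn0 : (0 : ℝ) < n := by exact_mod_cast (by omega : 0 < n)
        have hp : 0 < (n : ℝ) ^ (α - 2) := Real.rpow_pos_of_pos hn0 _
        have h2 := (le_abs_self _).trans h1
        rw [div_le_iff₀ hp] at h2
        have h3 := mul_le_mul_of_nonneg_left (tel1 α hα0 hlt n (by omega)) hC0
        rw [← mul_assoc, mul_sub] at h3
        linarith
    have : 0 ≤ C * (4 / (1 - α)) * (n : ℝ) ^ (α - 1) :=
      mul_nonneg (mul_nonneg hC0 (div_nonneg (by norm_num) (by linarith)))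
        (Real.rpow_nonneg (by positivity) _)
    linarith

lemma Q_pos (q : ℕ → ℝ) (hq0 : 0 < q 0) (hqnn : ∀ n, 0 ≤ q n) {n : ℕ} (hn : 1 ≤ n) :
    0 < Q q n :=
  Finset.sum_pos' (fun i _ => hqnn i) ⟨0, by simp; omega, hq0⟩

lemma Q_ratio (α : ℝ) (hα0 : 0 < α) (hα1 : α ≤ 1)
    (q : ℕ → ℝ) (hq0 : 0 < q 0) (hqnn : ∀ n, 0 ≤ q n) (hqm : Antitone q)
    (hQ : (fun n : ℕ => (n : ℝ) ^ α / Q q n) =O[atTop] (fun _ => (1 : ℝ)))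
    (hq' : (fun n : ℕ => (q n - q (n + 1)) / (n : ℝ) ^ (α - 2)) =O[atTop] (fun _ => (1 : ℝ))) :
    ∃ C : ℝ, 0 ≤ C ∧ ∀ j n : ℕ, 1 ≤ j → j ≤ n → Q q j ≤ C * ((j : ℝ) / n) ^ α * Q q n := by
  obtain ⟨C, hC0, hC⟩ := q_bound α hα0 hα1 q hqnn hqm hq'
  obtain ⟨C1, hC1⟩ := (isBigO_one_nat_atTop_iff).1 hQ
  have hC10 : 0 ≤ C1 := (norm_nonneg _).trans (hC1 0)
  refine ⟨1 + (C * (2 / α) + q 0) * C1, by positivity, ?_⟩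
  intro j n hj hjn
  have hn0 : (0 : ℝ) < n := by exact_mod_cast (by omega : 0 < n)
  have hj0 : (0 : ℝ) < j := by exact_mod_cast (by omega : 0 < j)
  have hjn' : (j : ℝ) ≤ n := by exact_mod_cast hjn
  have hQn := Q_pos q hq0 hqnn (show 1 ≤ n by omega)
  have hja : 1 ≤ (j : ℝ) ^ α := Real.one_le_rpow (by exact_mod_cast hj) hα0.le
  have h1 : Q q j ≤ j * q n + (C * (2 / α) + q 0) * (j : ℝ) ^ α := by
    have : ∀ j : ℕ, 1 ≤ j → j ≤ n → Q q j ≤ j * q n + C * (2 / α) * (j : ℝ) ^ α + q 0 := by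
      intro j hj
      induction j, hj using Nat.le_induction with
      | base =>
        intro _
        simp only [Q, Finset.sum_range_one, Nat.cast_one, Real.one_rpow]
        have := hqnn n
        have : 0 ≤ C * (2 / α) := by positivity
        linarith
      | succ j hj ih =>
        intro hjn
        have a1 := ih (by omega)
        have a2 := hC j n hj (by omega)
        have a3 := mul_le_mul_of_nonneg_left (tel2 α hα0 hα1 j hj) hC0
        rw [← mul_assoc, mul_sub] at a3
        have : Q q (j + 1) = Q q j + q j := Finset.sum_range_succ _ _
        rw [this]
        push_cast at a3 ⊢
        linarith
    have a := this j hj hjn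
    nlinarith
  have h2 : (j : ℝ) * q n ≤ ((j : ℝ) / n) ^ α * Q q n := by
    have a := mul_q_le_Q q hqm n
    have b : (j : ℝ) / n ≤ ((j : ℝ) / n) ^ α := by
      have := Real.rpow_le_rpow_of_exponent_ge (x := (j : ℝ) / n) (by positivity)
        ((div_le_one hn0).2 hjn') hα1
      simpa using this
    calc (j : ℝ) * q n = (j / n) * (n * q n) := by field_simp
      _ ≤ (j / n) * Q q n := by gcongr
      _ ≤ _ := by gcongr
  have h3 : (j : ℝ) ^ α ≤ C1 * ((j : ℝ) / n) ^ α * Q q n := by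
    have a := (le_abs_self _).trans (hC1 n)
    rw [div_le_iff₀ hQn] at a
    rw [Real.div_rpow hj0.le hn0.le]
    have hna : 0 < (n : ℝ) ^ α := Real.rpow_pos_of_pos hn0 _
    calc (j : ℝ) ^ α = (j : ℝ) ^ α / (n : ℝ) ^ α * (n : ℝ) ^ α := by field_simp
      _ ≤ (j : ℝ) ^ α / (n : ℝ) ^ α * (C1 * Q q n) := by gcongr
      _ = _ := by ring
  have h4 := mul_le_mul_of_nonneg_left h3 (show 0 ≤ C * (2 / α) + q 0 by positivity)
  calc Q q j ≤ _ := h1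
    _ ≤ _ := add_le_add h2 h4
    _ = _ := by ring

lemma rade_eq (m : ℕ → ℕ) (k : ℕ) (x : G m) :
    rade m k x = Complex.exp (2 * Real.pi * Complex.I / (m k : ℂ)) ^ (x k).val := by
  rw [← Complex.exp_nat_mul]
  unfold rade
  congr 1
  ring

lemma rade_prim {m : ℕ → ℕ} (hm : ∀ n, 2 ≤ m n) (k : ℕ) :
    IsPrimitiveRoot (Complex.exp (2 * Real.pi * Complex.I / (m k : ℂ))) (m k) :=
  Complex.isPrimitiveRoot_exp _ (by have := hm k; omega)

lemma rade_pow {m : ℕ → ℕ} (hm : ∀ n, 2 ≤ m n) (k : ℕ) (x : G m) : rade m k x ^ m k = 1 := by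
  rw [rade_eq, pow_right_comm, (rade_prim hm k).pow_eq_one, one_pow]

lemma rade_norm {m : ℕ → ℕ} (hm : ∀ n, 2 ≤ m n) (k : ℕ) (x : G m) : ‖rade m k x‖ = 1 :=
  Complex.norm_eq_one_of_pow_eq_one (rade_pow hm k x) (by have := hm k; omega)

lemma rade_ne_one {m : ℕ → ℕ} (hm : ∀ n, 2 ≤ m n) (k : ℕ) (x : G m) (hx : x k ≠ 0) :
    rade m k x ≠ 1 := by
  intro h
  rw [rade_eq, (rade_prim hm k).pow_eq_one_iff_dvd] at h
  have : NeZero (m k) := ⟨by have := hm k; omega⟩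
  have h1 := Nat.eq_zero_of_dvd_of_lt h (ZMod.val_lt (x k))
  exact hx ((ZMod.val_eq_zero _).1 h1)

lemma rade_one {m : ℕ → ℕ} (k : ℕ) (x : G m) (hx : x k = 0) :
    rade m k x = 1 := by
  rw [rade_eq, hx]; simp

lemma rade_meas (m : ℕ → ℕ) (k : ℕ) : Measurable (rade m k) := by
  have : rade m k = (fun z : ZMod (m k) =>
    Complex.exp (2 * Real.pi * Complex.I * (z.val : ℂ) / (m k : ℂ))) ∘ (fun x : G m => x k) := rfl
  rw [this]
  exact Measurable.of_discrete.comp (measurable_pi_apply k)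

lemma psi_meas (m : ℕ → ℕ) (k : ℕ) : Measurable (psi m k) := by
  unfold psi
  exact Finset.measurable_prod _ (fun i _ => (rade_meas m i).pow_const _)

lemma psi_norm {m : ℕ → ℕ} (hm : ∀ n, 2 ≤ m n) (k : ℕ) (x : G m) : ‖psi m k x‖ = 1 :=
  norm_PP m (fun k => rade m k x) (fun k => rade_norm hm k x) k

/-- quotient of Rademacher values -/
def ww (m : ℕ → ℕ) (x t : G m) (k : ℕ) : ℂ := rade m k x * (starRingEnd ℂ) (rade m k t)

lemma ww_norm {m : ℕ → ℕ} (hm : ∀ n, 2 ≤ m n) (x t : G m) (k : ℕ) : ‖ww m x t k‖ = 1 := by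
  unfold ww
  rw [norm_mul, RCLike.norm_conj, rade_norm hm, rade_norm hm, one_mul]

lemma ww_pow {m : ℕ → ℕ} (hm : ∀ n, 2 ≤ m n) (x t : G m) (k : ℕ) : ww m x t k ^ m k = 1 := by
  unfold ww
  rw [mul_pow, ← map_pow, rade_pow hm, rade_pow hm]; simp

lemma ww_ne {m : ℕ → ℕ} (hm : ∀ n, 2 ≤ m n) (x t : G m) (k N : ℕ) (hk : k < N) (hx : x k ≠ 0)
    (ht : t ∈ cyl m N 0) : ww m x t k ≠ 1 := by
  unfold ww
  rw [rade_one k t (ht k hk)]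
  simpa using rade_ne_one hm k x hx

lemma psi_mul (m : ℕ → ℕ) (x t : G m) (i : ℕ) :
    psi m i x * (starRingEnd ℂ) (psi m i t) = PP m (ww m x t) i := by
  unfold psi PP ww
  rw [map_prod, ← Finset.prod_mul_distrib]
  apply Finset.prod_congr rfl
  intro k _
  rw [map_pow, mul_pow]

/-- the kernel -/
def Ker (m : ℕ → ℕ) (q : ℕ → ℝ) (n : ℕ) (x t : G m) : ℂ :=
  ((Q q n : ℝ) : ℂ)⁻¹ * ∑ k ∈ Finset.Icc 1 n, (q (n - k) : ℂ) *
    ∑ i ∈ Finset.range k, PP m (ww m x t) i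

lemma fT_eq {m : ℕ → ℕ} (hm : ∀ n, 2 ≤ m n) (μ : Measure (G m)) (q : ℕ → ℝ) (a : G m → ℂ)
    (ha : Integrable a μ) (n : ℕ) (x : G m) :
    fT m q μ a n x = ∫ t, a t * Ker m q n x t ∂μ := by
  have hint : ∀ i, Integrable (fun t => a t * PP m (ww m x t) i) μ := by
    intro i
    have : (fun t => a t * PP m (ww m x t) i)
        = fun t => a t * (psi m i x * (starRingEnd ℂ) (psi m i t)) := by
      funext t; rw [psi_mul]
    rw [this]
    refine ha.mul_bdd (c := 1) ?_ ?_
    · exact ((measurable_const.mul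
        (Complex.continuous_conj.measurable.comp (psi_meas m i)))).aestronglyMeasurable
    · refine Filter.Eventually.of_forall (fun t => ?_)
      rw [norm_mul, RCLike.norm_conj, psi_norm hm, psi_norm hm, one_mul]
  have e1 : ∀ t, a t * Ker m q n x t = ((Q q n : ℝ) : ℂ)⁻¹ * ∑ k ∈ Finset.Icc 1 n,
      (q (n - k) : ℂ) * ∑ i ∈ Finset.range k, a t * PP m (ww m x t) i := by
    intro t
    unfold Ker
    simp only [Finset.mul_sum]
    apply Finset.sum_congr rfl
    intro k _
    apply Finset.sum_congr rfl
    intro i _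
    ring
  simp_rw [e1]
  rw [integral_const_mul, integral_finsetSum]
  · unfold fT
    congr 1
    apply Finset.sum_congr rfl
    intro k _
    rw [integral_const_mul, integral_finsetSum _ (fun i _ => hint i)]
    congr 1
    unfold fS
    apply Finset.sum_congr rfl
    intro i _
    unfold fcoef
    rw [← integral_mul_const]
    congr 1
    funext t
    rw [← psi_mul]; ring
  · intro k _
    exact (integrable_finsetSum _ (fun i _ => hint i)).const_mul _

lemma cyl_meas (m : ℕ → ℕ) (n : ℕ) (x : G m) : MeasurableSet (cyl m n x) := by
  have : cyl m n x = ⋂ j, ⋂ (_ : j < n), (fun y : G m => y j) ⁻¹' {x j} := by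
    ext y; simp [cyl]
  rw [this]
  exact MeasurableSet.iInter fun j => MeasurableSet.iInter fun _ =>
    measurable_pi_apply j (measurableSet_singleton _)

lemma fT_le {m : ℕ → ℕ} (hm : ∀ n, 2 ≤ m n) (μ : Measure (G m)) [IsProbabilityMeasure μ]
    (hμ : ∀ (n : ℕ) (x : G m), μ (cyl m n x) = ((MM m n : ℝ≥0∞))⁻¹)
    (α : ℝ) (q : ℕ → ℝ) (N : ℕ) (a : G m → ℂ) (ha : Measurable a)
    (hs : Function.support a ⊆ cyl m N 0)
    (hb : eLpNorm a ⊤ μ ≤ ENNReal.ofReal ((MM m N : ℝ) ^ (1 + α)))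
    (n : ℕ) (x : G m) (E : ℝ) (hE0 : 0 ≤ E) (hE : ∀ t ∈ cyl m N 0, ‖Ker m q n x t‖ ≤ E) :
    ‖fT m q μ a n x‖ ≤ (MM m N : ℝ) ^ α * E := by
  have hae : ∀ᵐ t ∂μ, ‖a t‖ ≤ (MM m N : ℝ) ^ (1 + α) := by
    rw [eLpNorm_exponent_top] at hb
    filter_upwards [ae_le_eLpNormEssSup (f := a) (μ := μ)] with t ht
    have := ht.trans hb
    rw [← ofReal_norm] at this
    exact (ENNReal.ofReal_le_ofReal_iff (Real.rpow_nonneg (by positivity) _)).1 this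
  have hint : Integrable a μ :=
    (integrable_const ((MM m N : ℝ) ^ (1 + α))).mono' ha.aestronglyMeasurable hae
  rw [fT_eq hm μ q a hint]
  rw [← setIntegral_eq_integral_of_forall_compl_eq_zero (s := cyl m N 0)]
  · have hp : (0 : ℝ) < MM m N := by exact_mod_cast MM_pos hm N
    have h1 := norm_setIntegral_le_of_norm_le_const_ae (μ := μ) (s := cyl m N 0)
      (f := fun t => a t * Ker m q n x t) (C := (MM m N : ℝ) ^ (1 + α) * E) (measure_lt_top _ _) (by
        rw [ae_restrict_iff' (cyl_meas m N 0)]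
        filter_upwards [hae] with t ht hts
        rw [norm_mul]
        exact mul_le_mul ht (hE t hts) (norm_nonneg _) (Real.rpow_nonneg hp.le _))
    refine h1.trans (le_of_eq ?_)
    rw [Measure.real, hμ, ENNReal.toReal_inv, ENNReal.toReal_natCast, Real.rpow_add hp,
      Real.rpow_one]
    field_simp
  · intro t ht
    have : a t = 0 := by
      by_contra h
      exact ht (hs h)
    rw [this, zero_mul]

lemma fT_bound {m : ℕ → ℕ} (hm : ∀ n, 2 ≤ m n) (B : ℕ) (hB : ∀ n, m n ≤ B)
    (μ : Measure (G m)) [IsProbabilityMeasure μ]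
    (hμ : ∀ (n : ℕ) (x : G m), μ (cyl m n x) = ((MM m n : ℝ≥0∞))⁻¹)
    (α : ℝ) (hα0 : 0 < α)
    (q : ℕ → ℝ) (hq0 : 0 < q 0) (hqnn : ∀ n, 0 ≤ q n) (hqm : Antitone q)
    (C : ℝ) (hC0 : 0 ≤ C)
    (hC : ∀ j n : ℕ, 1 ≤ j → j ≤ n → Q q j ≤ C * ((j : ℝ) / n) ^ α * Q q n)
    (N : ℕ) (a : G m → ℂ) (ha : Measurable a)
    (hs : Function.support a ⊆ cyl m N 0)
    (hb : eLpNorm a ⊤ μ ≤ ENNReal.ofReal ((MM m N : ℝ) ^ (1 + α)))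
    (n : ℕ) (hn : MM m N < n) (x : G m) (k l : ℕ) (hkl : k < l) (hlN : l ≤ N) (hxk : x k ≠ 0)
    (hxl : l < N → x l ≠ 0) :
    ‖fT m q μ a n x‖ ≤ (B + (B + 2 * B * B) * C) * (MM m k * (MM m l : ℝ) ^ α) := by
  have hn1 : 1 ≤ n := by omega
  have hQn := Q_pos q hq0 hqnn hn1
  have hk1 : (MM m (k + 1) : ℝ) ≤ B * MM m k := by
    have : MM m (k + 1) ≤ B * MM m k := Nat.mul_le_mul_right _ (hB k)
    exact_mod_cast this
  have hMN : (0 : ℝ) < MM m N := by exact_mod_cast MM_pos hm N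
  have hMl : (0 : ℝ) < MM m l := by exact_mod_cast MM_pos hm l
  have hnN : (MM m N : ℝ) ≤ n := by exact_mod_cast hn.le
  have hn0 : (0 : ℝ) < n := by linarith
  rcases hlN.eq_or_lt with rfl | hlt
  · refine (fT_le hm μ hμ α q l a ha hs hb n x (B * MM m k) (by positivity) ?_).trans ?_
    · intro t ht
      unfold Ker
      have h1 := kernel_bound1 q hqnn (fun j => ∑ i ∈ Finset.range j, PP m (ww m x t) i)
        (MM m (k + 1)) (fun j => DD_bound hm _ (ww_norm hm x t) (ww_pow hm x t)
          (ww_ne hm x t k l hkl hxk ht) j) n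
      rw [norm_mul, norm_inv, Complex.norm_real, Real.norm_of_nonneg hQn.le, inv_mul_le_iff₀ hQn]
      refine h1.trans ?_
      rw [mul_comm]
      gcongr
    · have : 0 ≤ (B + 2 * B * B) * C * (MM m k * (MM m l : ℝ) ^ α) := by positivity
      nlinarith
  · have hMlN : MM m l ≤ MM m N := Nat.le_of_dvd (MM_pos hm N) (MM_dvd hlt.le)
    have hMl1 := MM_pos hm l
    refine (fT_le hm μ hμ α q N a ha hs hb n x
      ((B + 2 * B * B) * MM m k * (C * ((MM m l : ℝ) / n) ^ α)) (by positivity) ?_).trans ?_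
    · intro t ht
      unfold Ker
      have h1 := kernel_bound2 q hqnn hqm (fun j => ∑ i ∈ Finset.range j, PP m (ww m x t) i)
        (B * MM m k) (B * (B * MM m k)) (by simp) (fun j => (DD_bound hm _ (ww_norm hm x t)
          (ww_pow hm x t) (ww_ne hm x t k N (hkl.trans hlt) hxk ht) j).trans hk1) (MM m l) n
          (by omega) (by positivity) (fun j => (SS_bound hm _ (ww_norm hm x t)
          (ww_pow hm x t) hkl (ww_ne hm x t k N (hkl.trans hlt) hxk ht)
          (ww_ne hm x t l N hlt (hxl hlt) ht) j).trans (by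
            have : (MM m (l + 1) : ℝ) ≤ B * MM m l := by
              have : MM m (l + 1) ≤ B * MM m l := Nat.mul_le_mul_right _ (hB l)
              exact_mod_cast this
            calc (MM m (l + 1) : ℝ) * MM m (k + 1) ≤ (B * MM m l) * (B * MM m k) := by gcongr
              _ = _ := by ring))
      rw [norm_mul, norm_inv, Complex.norm_real, Real.norm_of_nonneg hQn.le, inv_mul_le_iff₀ hQn]
      refine h1.trans ?_
      calc _ ≤ (B * MM m k + 2 * (B * (B * MM m k))) * (C * ((MM m l : ℝ) / n) ^ α * Q q n) := by
            gcongr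
            exact hC (MM m l) n hMl1 (by omega)
        _ = _ := by ring
    · have h2 : (MM m N : ℝ) ^ α * ((MM m l : ℝ) / n) ^ α ≤ (MM m l : ℝ) ^ α := by
        rw [← Real.mul_rpow hMN.le (by positivity)]
        apply Real.rpow_le_rpow (by positivity) _ hα0.le
        rw [mul_div_assoc', div_le_iff₀ hn0, mul_comm]
        gcongr
      calc (MM m N : ℝ) ^ α * ((B + 2 * B * B) * MM m k * (C * ((MM m l : ℝ) / n) ^ α))
          = (B + 2 * B * B) * MM m k * C * ((MM m N : ℝ) ^ α * ((MM m l : ℝ) / n) ^ α) := by ring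
        _ ≤ (B + 2 * B * B) * MM m k * C * (MM m l : ℝ) ^ α := by gcongr
        _ ≤ _ := by
          have : 0 ≤ B * (MM m k * (MM m l : ℝ) ^ α) := by positivity
          nlinarith

/-- The set `A_{k,l}`. -/
def AA (m : ℕ → ℕ) (N k l : ℕ) : Set (G m) :=
  {x | x k ≠ 0 ∧ (∀ j < l, j ≠ k → x j = 0) ∧ (l < N → x l ≠ 0)}

lemma AA_meas (m : ℕ → ℕ) (N k l : ℕ) : MeasurableSet (AA m N k l) := by
  have h : ∀ j, MeasurableSet {x : G m | x j = 0} := fun j =>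
    measurable_pi_apply j (measurableSet_singleton _)
  have e : AA m N k l = {x : G m | x k = 0}ᶜ ∩ ((⋂ j, ⋂ (_ : j < l), ⋂ (_ : j ≠ k),
      {x : G m | x j = 0}) ∩ ⋂ (_ : l < N), {x : G m | x l = 0}ᶜ) := by
    ext x; simp [AA]
  rw [e]
  exact (h k).compl.inter ((MeasurableSet.iInter fun j => MeasurableSet.iInter fun _ =>
    MeasurableSet.iInter fun _ => h j).inter (MeasurableSet.iInter fun _ => (h l).compl))

lemma AA_measure {m : ℕ → ℕ} (hm : ∀ n, 2 ≤ m n) (B : ℕ) (hB : ∀ n, m n ≤ B)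
    (μ : Measure (G m))
    (hμ : ∀ (n : ℕ) (x : G m), μ (cyl m n x) = ((MM m n : ℝ≥0∞))⁻¹) (N k l : ℕ) :
    μ (AA m N k l) ≤ ENNReal.ofReal (B / MM m l) := by
  have : NeZero (m k) := ⟨by have := hm k; omega⟩
  have hsub : AA m N k l ⊆ ⋃ s ∈ (Finset.univ : Finset (ZMod (m k))),
      cyl m l (Function.update (0 : G m) k s) := by
    intro x hx
    simp only [Set.mem_iUnion]
    refine ⟨x k, Finset.mem_univ _, ?_⟩
    intro j hj
    by_cases hjk : j = k
    · subst hjk; simp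
    · rw [Function.update_of_ne hjk]; exact hx.2.1 j hj hjk
  refine (measure_mono hsub).trans ((measure_biUnion_finset_le _ _).trans ?_)
  simp only [hμ, Finset.sum_const, Finset.card_univ, ZMod.card, nsmul_eq_mul]
  have hp : (0 : ℝ) < MM m l := by exact_mod_cast MM_pos hm l
  rw [ENNReal.ofReal_div_of_pos hp, ENNReal.ofReal_natCast, ENNReal.ofReal_natCast, div_eq_mul_inv]
  gcongr
  exact hB k

lemma AA_cover {m : ℕ → ℕ} (N : ℕ) (x : G m) (hx : x ∈ (cyl m N 0)ᶜ) :
    ∃ k l, k < l ∧ l ≤ N ∧ x ∈ AA m N k l := by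
  classical
  have h1 : ∃ k, k < N ∧ x k ≠ 0 := by
    by_contra h
    push Not at h
    exact hx (fun j hj => h j hj)
  obtain ⟨hkN, hxk⟩ := Nat.find_spec h1
  have hkmin : ∀ j < Nat.find h1, x j = 0 := by
    intro j hj
    have := Nat.find_min h1 hj
    by_contra h
    exact this ⟨by omega, h⟩
  set k := Nat.find h1
  have h2 : ∃ l, k < l ∧ (l < N → x l ≠ 0) := ⟨N, hkN, fun h => absurd h (lt_irrefl _)⟩
  obtain ⟨hkl, hxl⟩ := Nat.find_spec h2
  have hlmin : ∀ j < Nat.find h2, k < j → x j = 0 := by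
    intro j hj hkj
    have := Nat.find_min h2 hj
    by_contra h
    exact this ⟨hkj, fun _ => h⟩
  have hlN : Nat.find h2 ≤ N := Nat.find_min' h2 ⟨hkN, fun h => absurd h (lt_irrefl _)⟩
  refine ⟨k, Nat.find h2, hkl, hlN, hxk, ?_, hxl⟩
  intro j hj hjk
  rcases lt_or_gt_of_ne hjk with h | h
  · exact hkmin j h
  · exact hlmin j hj h

lemma geo_bound (r : ℝ) (hr0 : 0 ≤ r) (hr1 : r < 1) (l : ℕ) :
    ∑ k ∈ Finset.range l, r ^ (l - k) ≤ 1 / (1 - r) := by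
  induction l with
  | zero => simp; linarith
  | succ l ih =>
    rw [Finset.sum_range_succ]
    have : ∑ k ∈ Finset.range l, r ^ (l + 1 - k) = r * ∑ k ∈ Finset.range l, r ^ (l - k) := by
      rw [Finset.mul_sum]
      apply Finset.sum_congr rfl
      intro k hk
      have := Finset.mem_range.1 hk
      rw [show l + 1 - k = (l - k) + 1 by omega, pow_succ]; ring
    rw [this]
    have h := mul_le_mul_of_nonneg_left ih hr0
    have h1 : (0 : ℝ) < 1 - r := by linarith
    have h2 : r * (1 / (1 - r)) + r ≤ 1 / (1 - r) := by
      have : 1 / (1 - r) - (r * (1 / (1 - r)) + r) = 1 - r := by field_simp; ring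
      linarith
    simp only [Nat.add_sub_cancel_left, pow_one]
    linarith

/-- The constant bounding the integrand on `A_{k,l}`. -/
def cst (m : ℕ → ℕ) (α C : ℝ) (N k l : ℕ) : ℝ :=
  (C * (MM m k * (MM m l : ℝ) ^ α) / (N * Real.log 2) ^ (1 + α)) ^ (1 / (1 + α))

lemma cst_mul {m : ℕ → ℕ} (hm : ∀ n, 2 ≤ m n) (α C : ℝ) (hα0 : 0 < α) (hC : 0 ≤ C) (B N k l : ℕ)
    (hN : 1 ≤ N) (hkl : k < l) :
    cst m α C N k l * (B / MM m l) ≤ C ^ (1 / (1 + α)) * B / (N * Real.log 2) *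
      ((2 : ℝ)⁻¹ ^ (1 / (1 + α))) ^ (l - k) := by
  have hMk : (0 : ℝ) < MM m k := by exact_mod_cast MM_pos hm k
  have hMl : (0 : ℝ) < MM m l := by exact_mod_cast MM_pos hm l
  have hlog : 0 < Real.log 2 := Real.log_pos (by norm_num)
  have hN0 : (0 : ℝ) < N := by exact_mod_cast hN
  have hX : 0 < N * Real.log 2 := by positivity
  set p := 1 / (1 + α) with hp
  have hp0 : 0 < p := by rw [hp]; positivity
  have hpa : (1 + α) * p = 1 := by rw [hp]; field_simp
  unfold cst
  rw [← hp, Real.div_rpow (by positivity) (by positivity), ← Real.rpow_mul hX.le, hpa, Real.rpow_one,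
    Real.mul_rpow hC (by positivity), Real.mul_rpow hMk.le (by positivity), ← Real.rpow_mul hMl.le]
  have e1 : (MM m l : ℝ) ^ (α * p) = MM m l / (MM m l : ℝ) ^ p := by
    rw [show α * p = 1 - p by linarith, Real.rpow_sub hMl, Real.rpow_one]
  have hlp : 0 < (MM m l : ℝ) ^ p := Real.rpow_pos_of_pos hMl _
  rw [e1]
  have e2 : C ^ p * ((MM m k : ℝ) ^ p * (MM m l / (MM m l : ℝ) ^ p)) / (N * Real.log 2) * (B / MM m l)
      = C ^ p * B / (N * Real.log 2) * (MM m k / MM m l : ℝ) ^ p := by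
    rw [Real.div_rpow hMk.le hMl.le]; field_simp
  rw [e2]
  have hCp : 0 ≤ C ^ p := Real.rpow_nonneg hC _
  gcongr
  rw [← Real.rpow_natCast, ← Real.rpow_mul (by norm_num), mul_comm p, Real.rpow_mul (by norm_num),
    Real.rpow_natCast]
  apply Real.rpow_le_rpow (by positivity) _ hp0.le
  rw [inv_pow, div_le_iff₀ hMl, ← div_eq_inv_mul, le_div_iff₀ (by positivity), mul_comm]
  exact_mod_cast two_pow_mul_MM_le hm hkl.le

theorem statement19
    (m : ℕ → ℕ) (hm : ∀ n, 2 ≤ m n) (hmb : ∃ B, ∀ n, m n ≤ B)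
    (μ : Measure (G m)) [IsProbabilityMeasure μ]
    (hμ : ∀ (n : ℕ) (x : G m), μ (cyl m n x) = ((MM m n : ℝ≥0∞))⁻¹)
    (α : ℝ) (hα0 : 0 < α) (hα1 : α ≤ 1)
    (q : ℕ → ℝ) (hq0 : 0 < q 0) (hqnn : ∀ n, 0 ≤ q n) (hqmono : ∀ n, q (n + 1) ≤ q n)
    (hQ : (fun n : ℕ => (n : ℝ) ^ α / Q q n) =O[atTop] (fun _ => (1 : ℝ)))
    (hq' : (fun n : ℕ => (q n - q (n + 1)) / (n : ℝ) ^ (α - 2)) =O[atTop] (fun _ => (1 : ℝ))) :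
    ∃ c : ℝ≥0, ∀ N : ℕ, ∀ a : G m → ℂ, Measurable a →
      Function.support a ⊆ cyl m N 0 →
      (∫ x in cyl m N 0, a x ∂μ) = 0 →
      eLpNorm a ⊤ μ ≤ ENNReal.ofReal ((MM m N : ℝ) ^ (1 + α)) →
      ∫⁻ x in (cyl m N 0)ᶜ,
          (⨆ n : ℕ, ⨆ (_ : MM m N < n),
            (‖fT m q μ a n x‖₊ : ℝ≥0∞) / ENNReal.ofReal (Real.log (n + 1) ^ (1 + α)))
            ^ (1 / (1 + α)) ∂μ ≤ (c : ℝ≥0∞) := by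
  obtain ⟨B, hB⟩ := hmb
  have hqm : Antitone q := antitone_nat_of_succ_le hqmono
  obtain ⟨C0, hC00, hC0⟩ := Q_ratio α hα0 hα1 q hq0 hqnn hqm hQ hq'
  set C : ℝ := B + (B + 2 * B * B) * C0 with hCdef
  have hC : 0 ≤ C := by positivity
  set p := 1 / (1 + α) with hp
  have hp0 : 0 < p := by rw [hp]; positivity
  set r : ℝ := (2 : ℝ)⁻¹ ^ p with hr
  have hr0 : 0 ≤ r := by positivity
  have hr1 : r < 1 := Real.rpow_lt_one (by norm_num) (by norm_num) hp0
  have hlog : 0 < Real.log 2 := Real.log_pos (by norm_num)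
  set c : ℝ := C ^ p * B / Real.log 2 * (2 * (1 / (1 - r))) with hc
  refine ⟨c.toNNReal, ?_⟩
  intro N a ha hs _ hb
  rcases Nat.eq_zero_or_pos N with rfl | hN
  · have : (cyl m 0 (0 : G m))ᶜ = ∅ := by ext x; simp [cyl]
    rw [this]; simp
  have hN0 : (0 : ℝ) < N := by exact_mod_cast hN
  have hX : 0 < N * Real.log 2 := by positivity
  have hcst0 : ∀ k l, 0 ≤ cst m α C N k l := fun k l => by
    unfold cst; positivity
  -- pointwise bound
  have hpt : ∀ x k l, k < l → l ≤ N → x ∈ AA m N k l →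
      (⨆ n : ℕ, ⨆ (_ : MM m N < n),
            (‖fT m q μ a n x‖₊ : ℝ≥0∞) / ENNReal.ofReal (Real.log (n + 1) ^ (1 + α))) ^ p
        ≤ ENNReal.ofReal (cst m α C N k l) := by
    intro x k l hkl hlN hx
    unfold cst
    rw [← hp, ← ENNReal.ofReal_rpow_of_nonneg (by positivity) hp0.le]
    apply ENNReal.rpow_le_rpow _ hp0.le
    refine iSup_le fun n => iSup_le fun hn => ?_
    have h1 := fT_bound hm B hB μ hμ α hα0 q hq0 hqnn hqm C0 hC00 hC0 N a ha hs hb n hn x k l hkl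
      hlN hx.1 hx.2.2
    have h2 : N * Real.log 2 ≤ Real.log (n + 1) := by
      rw [← Real.log_pow]
      apply Real.log_le_log (by positivity)
      have h3 := two_pow_mul_MM_le hm (Nat.zero_le N)
      simp only [MM, Nat.sub_zero, mul_one] at h3
      have : 2 ^ N ≤ n + 1 := by omega
      exact_mod_cast this
    have h4 : (N * Real.log 2) ^ (1 + α) ≤ Real.log (n + 1) ^ (1 + α) :=
      Real.rpow_le_rpow hX.le h2 (by positivity)
    have h5 : 0 < (N * Real.log 2) ^ (1 + α) := Real.rpow_pos_of_pos hX _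
    rw [ENNReal.ofReal_div_of_pos h5]
    apply ENNReal.div_le_div
    · have : (‖fT m q μ a n x‖₊ : ℝ≥0∞) = ENNReal.ofReal ‖fT m q μ a n x‖ :=
        (ofReal_norm _).symm
      rw [this]
      exact ENNReal.ofReal_le_ofReal h1
    · exact ENNReal.ofReal_le_ofReal h4
  calc _ ≤ ∫⁻ x in (cyl m N 0)ᶜ, ∑ l ∈ Finset.range (N + 1), ∑ k ∈ Finset.range l,
        (AA m N k l).indicator (fun _ => ENNReal.ofReal (cst m α C N k l)) x ∂μ := by
        refine setLIntegral_mono' (cyl_meas m N 0).compl ?_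
        intro x hx
        obtain ⟨k, l, hkl, hlN, hxA⟩ := AA_cover N x hx
        refine (hpt x k l hkl hlN hxA).trans ?_
        have e1 : ENNReal.ofReal (cst m α C N k l)
          = (AA m N k l).indicator (fun _ => ENNReal.ofReal (cst m α C N k l)) x := by
          rw [Set.indicator_of_mem hxA]
        rw [e1]
        refine (Finset.single_le_sum (f := fun k => (AA m N k l).indicator
          (fun _ => ENNReal.ofReal (cst m α C N k l)) x) (fun _ _ => zero_le)
          (Finset.mem_range.2 hkl)).trans ?_
        exact Finset.single_le_sum (f := fun l => ∑ k ∈ Finset.range l, (AA m N k l).indicator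
          (fun _ => ENNReal.ofReal (cst m α C N k l)) x) (fun _ _ => zero_le)
          (Finset.mem_range.2 (Nat.lt_succ_of_le hlN))
    _ ≤ ∫⁻ x, ∑ l ∈ Finset.range (N + 1), ∑ k ∈ Finset.range l,
        (AA m N k l).indicator (fun _ => ENNReal.ofReal (cst m α C N k l)) x ∂μ :=
        setLIntegral_le_lintegral _ _
    _ = ∑ l ∈ Finset.range (N + 1), ∑ k ∈ Finset.range l,
        ENNReal.ofReal (cst m α C N k l) * μ (AA m N k l) := by
        rw [lintegral_finsetSum]
        · apply Finset.sum_congr rfl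
          intro l _
          rw [lintegral_finsetSum]
          · apply Finset.sum_congr rfl
            intro k _
            rw [lintegral_indicator_const (AA_meas m N k l)]
          · intro k _
            exact measurable_const.indicator (AA_meas m N k l)
        · intro l _
          exact Finset.measurable_sum _ fun k _ => measurable_const.indicator (AA_meas m N k l)
    _ ≤ ∑ l ∈ Finset.range (N + 1), ∑ k ∈ Finset.range l,
        ENNReal.ofReal (C ^ p * B / (N * Real.log 2) * r ^ (l - k)) := by
        refine Finset.sum_le_sum fun l _ => Finset.sum_le_sum fun k hk => ?_
        refine (mul_le_mul' le_rfl (AA_measure hm B hB μ hμ N k l)).trans ?_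
        rw [← ENNReal.ofReal_mul (hcst0 k l)]
        exact ENNReal.ofReal_le_ofReal
          (cst_mul hm α C hα0 hC B N k l hN (Finset.mem_range.1 hk))
    _ = ENNReal.ofReal (∑ l ∈ Finset.range (N + 1), ∑ k ∈ Finset.range l,
        (C ^ p * B / (N * Real.log 2) * r ^ (l - k))) := by
        rw [ENNReal.ofReal_sum_of_nonneg]
        · refine Finset.sum_congr rfl fun l _ => ?_
          rw [ENNReal.ofReal_sum_of_nonneg]
          intro k _
          positivity
        · intro l _
          exact Finset.sum_nonneg fun k _ => by positivity
    _ ≤ ENNReal.ofReal c := by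
        apply ENNReal.ofReal_le_ofReal
        simp_rw [← Finset.mul_sum]
        have h1 : ∑ l ∈ Finset.range (N + 1), ∑ k ∈ Finset.range l, r ^ (l - k)
            ≤ (N + 1) * (1 / (1 - r)) := by
          have := Finset.sum_le_card_nsmul (Finset.range (N + 1))
            (fun l => ∑ k ∈ Finset.range l, r ^ (l - k)) _ (fun l _ => geo_bound r hr0 hr1 l)
          simpa using this
        have h3 : 0 ≤ 1 / (1 - r) := div_nonneg zero_le_one (by linarith)
        have h2 : ((N : ℝ) + 1) * (1 / (1 - r)) ≤ (N * 2) * (1 / (1 - r)) := by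
          have : (1 : ℝ) ≤ N := by exact_mod_cast hN
          gcongr
          linarith
        calc _ ≤ C ^ p * B / (N * Real.log 2) * ((N * 2) * (1 / (1 - r))) := by
              gcongr
              exact h1.trans h2
          _ = c := by rw [hc]; field_simp
    _ = _ := rfl

end Vilenkin
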